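/- If a simple graph G has u vertices of odd degree and g nonisolated vertices of even degree, then the edges of G can be partitioned into at most u/2 + ⌊(3/4)g⌋ paths; in particular at most ⌊(3/4)n⌋ paths suffice. -/

import Mathlib

namespace Donald
variable {V : Type*}

/-- multiset of edges of a vertex list -/
def edg : List V → Multiset (Sym2 V)
  | [] => 0
  | [_] => 0
  | x :: y :: l => s(x, y) ::ₘ edg (y :: l)

/-- the head of a list, as a multiset -/
def hdM : List V → Multiset V
  | [] => 0
  | x :: _ => {x}

lemma hdM_nil : hdM ([] : List V) = 0 := rfl

/-- both ends of a list -/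
def ends (l : List V) : Multiset V := hdM l + hdM l.reverse

/-- star with centre `a` -/
def star (a : V) (M : Multiset V) : Multiset (Sym2 V) := M.map (fun v => s(a, v))

@[simp] lemma star_zero (a : V) : star a 0 = 0 := rfl
lemma star_add (a : V) (M N : Multiset V) : star a (M + N) = star a M + star a N := by
  simp [star]
@[simp] lemma star_singleton (a b : V) : star a {b} = {s(a, b)} := rfl

lemma edg_cons (a : V) (k : List V) : edg (a :: k) = star a (hdM k) + edg k := by
  cases k with
  | nil => simp [edg, hdM]
  | cons y l => simp [edg, hdM, Multiset.singleton_add]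

lemma hdM_append_cons (A : List V) (a : V) (B : List V) :
    hdM (A ++ a :: B) = hdM (A ++ [a]) := by
  cases A <;> simp [hdM]

lemma hdM_append_of_ne {A : List V} (h : A ≠ []) (B : List V) : hdM (A ++ B) = hdM A := by
  cases A with
  | nil => exact absurd rfl h
  | cons x t => simp [hdM]

lemma edg_mid (A : List V) (a : V) (B : List V) :
    edg (A ++ a :: B) = edg A + star a (hdM A.reverse) + star a (hdM B) + edg B := by
  induction A with
  | nil => simp [edg_cons, edg, hdM]
  | cons x A ih =>
    rw [List.cons_append, edg_cons, ih, edg_cons]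
    cases A with
    | nil => simp [hdM, edg, Sym2.eq_swap]
    | cons y A =>
      have : hdM (x :: y :: A).reverse = hdM (y :: A).reverse := by
        rw [List.reverse_cons, hdM_append_of_ne (by simp)]
      rw [this]
      simp only [List.cons_append, hdM]
      abel

lemma edg_reverse (l : List V) : edg l.reverse = edg l := by
  induction l with
  | nil => rfl
  | cons x l ih =>
    rw [List.reverse_cons, edg_mid, ih, List.reverse_reverse, edg_cons]
    simp [hdM, edg, add_comm]

lemma ends_reverse (l : List V) : ends l.reverse = ends l := by
  simp [ends, add_comm]

lemma card_ends {l : List V} (h : l ≠ []) : (ends l).card = 2 := by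
  have aux : ∀ m : List V, m ≠ [] → (hdM m).card = 1 := by
    intro m hm
    cases m with
    | nil => exact absurd rfl hm
    | cons x t => rfl
  rw [ends, Multiset.card_add, aux _ h, aux _ (by simpa using h)]

/-- path through `a` made of two segments -/
def asm (a : V) (p : List V × List V) : List V := p.1.reverse ++ a :: p.2

/-- free end of a segment attached to `a` -/
def lstD (a : V) (A : List V) : Multiset V := hdM (A.reverse ++ [a])

lemma ends_asm (a : V) (p : List V × List V) : ends (asm a p) = lstD a p.1 + lstD a p.2 := by
  rw [ends, asm, hdM_append_cons]
  simp only [List.reverse_append, List.reverse_cons, List.reverse_reverse, List.append_assoc,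
    List.singleton_append]
  rw [hdM_append_cons p.2.reverse]
  rfl

lemma edg_asm (a : V) (p : List V × List V) :
    edg (asm a p) = (edg p.1 + edg p.2) + star a (hdM p.1 + hdM p.2) := by
  rw [asm, edg_mid, edg_reverse, List.reverse_reverse, star_add]
  abel

lemma lstD_flip (a : V) (A : List V) : hdM A + lstD a A = hdM A.reverse + lstD a A.reverse := by
  by_cases h : A = []
  · subst h; rfl
  · rw [lstD, lstD, hdM_append_of_ne (by simpa using h), hdM_append_of_ne (by simpa using h),
      List.reverse_reverse, add_comm]

lemma lstD_of_ne (a : V) {A : List V} (h : A ≠ []) : lstD a A = hdM A.reverse := by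
  rw [lstD, hdM_append_of_ne (by simpa using h)]

/-- same list up to reversal -/
def flip1 (l m : List V) : Prop := m = l ∨ m = l.reverse
/-- same pair up to reversals -/
def flip2 (p q : List V × List V) : Prop := flip1 p.1 q.1 ∧ flip1 p.2 q.2

lemma flip1_refl (l : List V) : flip1 l l := Or.inl rfl
lemma flip2_refl (l : List V × List V) : flip2 l l := ⟨Or.inl rfl, Or.inl rfl⟩

lemma rel_refl' {α : Type*} {r : α → α → Prop} (h : ∀ a, r a a) (s : Multiset α) :
    Multiset.Rel r s s := Multiset.rel_refl_of_refl_on (fun a _ => h a)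

lemma rel_map_eq {α β γ : Type*} {r : α → β → Prop} {f : α → γ} {g : β → γ}
    (h : ∀ a b, r a b → f a = g b) {s : Multiset α} {t : Multiset β}
    (hr : Multiset.Rel r s t) : s.map f = t.map g := by
  induction hr with
  | zero => rfl
  | cons hab _ ih => simp [ih, h _ _ hab]

/-- heads of attached segments -/
def heads (T : Multiset (List V × List V)) : Multiset V :=
  (T.map (fun p => hdM p.1 + hdM p.2)).sum
/-- lasts of attached segments -/
def lasts (T : Multiset (List V × List V)) : Multiset V :=
  (T.map (fun p => hdM p.1.reverse + hdM p.2.reverse)).sum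
/-- all ends -/
def endsS (F : Multiset (List V)) : Multiset V := (F.map ends).sum
/-- all edges -/
def edgS (F : Multiset (List V)) : Multiset (Sym2 V) := (F.map edg).sum

@[simp] lemma heads_cons (p : List V × List V) (T : Multiset (List V × List V)) :
    heads (p ::ₘ T) = hdM p.1 + hdM p.2 + heads T := by simp [heads]
@[simp] lemma lasts_cons (p : List V × List V) (T : Multiset (List V × List V)) :
    lasts (p ::ₘ T) = hdM p.1.reverse + hdM p.2.reverse + lasts T := by simp [lasts]
@[simp] lemma endsS_cons (p : List V) (T : Multiset (List V)) :
    endsS (p ::ₘ T) = ends p + endsS T := by simp [endsS]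
@[simp] lemma edgS_cons (p : List V) (T : Multiset (List V)) :
    edgS (p ::ₘ T) = edg p + edgS T := by simp [edgS]
@[simp] lemma endsS_add (p T : Multiset (List V)) :
    endsS (p + T) = endsS p + endsS T := by simp [endsS]
@[simp] lemma edgS_add (p T : Multiset (List V)) :
    edgS (p + T) = edgS p + edgS T := by simp [edgS]

lemma mem_hdM {x : V} {l : List V} (h : x ∈ hdM l) : l ≠ [] ∧ hdM l = {x} := by
  cases l with
  | nil => simp [hdM] at h
  | cons y t => simp [hdM] at h ⊢; exact h.symm

lemma mem_sum_map {α : Type*} {x : V} {T : Multiset α} {f : α → Multiset V}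
    (h : x ∈ (T.map f).sum) : ∃ p ∈ T, x ∈ f p := by
  induction T using Multiset.induction with
  | empty => simp at h
  | cons p T ih =>
    rw [Multiset.map_cons, Multiset.sum_cons, Multiset.mem_add] at h
    rcases h with h | h
    · exact ⟨p, by simp, h⟩
    · obtain ⟨q, hq, hx⟩ := ih h
      exact ⟨q, by simp [hq], hx⟩

/-- conclusion of the core lemma -/
def CoreC (F : Multiset (List V)) (T : Multiset (List V × List V)) (X Z : Finset V) : Prop :=
  ∃ (F' K : Multiset (List V)) (T' : Multiset (List V × List V)) (B : Finset V),
    Multiset.Rel flip1 F (F' + K) ∧ Multiset.Rel flip2 T T' ∧ B ⊆ X ∧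
    X.card ≤ Z.card + 2 * B.card ∧ heads T' + (K.map hdM).sum = heads T + B.val

/-- hypotheses of the core lemma -/
structure CoreH (F : Multiset (List V)) (T : Multiset (List V × List V)) (X Z : Finset V) :
    Prop where
  nd : (heads T).Nodup
  dX : ∀ x ∈ X, x ∉ heads T
  dZ : ∀ x ∈ X, x ∉ Z
  cov : ∀ v, v ∈ heads T ∨ v ∈ X → v ∉ Z → v ∈ lasts T + endsS F

/-- measure for the induction -/
def meas (F : Multiset (List V)) (T : Multiset (List V × List V)) : ℕ :=
  (T.map (fun p => p.1.length + p.2.length)).sum + F.card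

lemma hd_pair {A : List V} {x : V} (h : x ∈ hdM A.reverse) : ∃ y, hdM A = {y} := by
  have := (mem_hdM h).1
  cases A with
  | nil => simp at this
  | cons y t => exact ⟨y, rfl⟩

lemma heads_swap (A B : List V) (T : Multiset (List V × List V)) :
    heads ((A, B) ::ₘ T) = heads ((B, A) ::ₘ T) := by simp [add_comm (hdM A)]
lemma lasts_swap (A B : List V) (T : Multiset (List V × List V)) :
    lasts ((A, B) ::ₘ T) = lasts ((B, A) ::ₘ T) := by simp [add_comm (hdM A.reverse)]

lemma CoreC.swap {F : Multiset (List V)} {A B : List V} {T : Multiset (List V × List V)}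
    {X Z : Finset V} (h : CoreC F ((A, B) ::ₘ T) X Z) : CoreC F ((B, A) ::ₘ T) X Z := by
  obtain ⟨F', K, T', B', h1, h2, h3, h4, h5⟩ := h
  rw [Multiset.rel_cons_left] at h2
  obtain ⟨⟨P, Q⟩, T0', h6, h7, rfl⟩ := h2
  refine ⟨F', K, (Q, P) ::ₘ T0', B', h1, Multiset.Rel.cons ⟨h6.2, h6.1⟩ h7, h3, h4, ?_⟩
  rw [heads_swap, h5, heads_swap]

lemma CoreH.swap {F : Multiset (List V)} {A B : List V} {T : Multiset (List V × List V)}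
    {X Z : Finset V} (h : CoreH F ((A, B) ::ₘ T) X Z) : CoreH F ((B, A) ::ₘ T) X Z := by
  constructor
  · rw [heads_swap]; exact h.nd
  · rw [heads_swap]; exact h.dX
  · exact h.dZ
  · rw [heads_swap, lasts_swap]; exact h.cov

lemma core_step1 [DecidableEq V] {F : Multiset (List V)} {A B : List V}
    {T : Multiset (List V × List V)} {X Z : Finset V} (h : CoreH F ((A, B) ::ₘ T) X Z) {x : V}
    (hx : x ∈ X) (hxA : x ∈ hdM A.reverse)
    (IH : ∀ X' Z', CoreH F (([], B) ::ₘ T) X' Z' → CoreC F (([], B) ::ₘ T) X' Z') :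
    CoreC F ((A, B) ::ₘ T) X Z := by
  obtain ⟨y, hy⟩ := hd_pair hxA
  have hxA' := (mem_hdM hxA).2
  obtain ⟨nd, dX, dZ, cov⟩ := h
  simp only [heads_cons, lasts_cons, hy, hxA'] at nd dX cov
  have hyx : y ≠ x := by
    rintro rfl; exact dX _ hx (by simp)
  have hyX : y ∉ X := fun hyX => dX _ hyX (by simp)
  have nd' : (hdM B + heads T).Nodup ∧ y ∉ hdM B + heads T := by
    rw [add_assoc, Multiset.singleton_add, Multiset.nodup_cons] at nd
    exact ⟨nd.2, nd.1⟩
  have fin : ∀ (F' K : Multiset (List V)) (T' : Multiset (List V × List V)) (B2 : Finset V)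
      (A' : List V), flip1 A A' → Multiset.Rel flip1 F (F' + K) →
      Multiset.Rel flip2 (([], B) ::ₘ T) T' → ∀ B3 : Finset V, B3 ⊆ X →
      X.card ≤ Z.card + 2 * B3.card → 
      heads T' + (K.map hdM).sum = heads (([], B) ::ₘ T) + B2.val →
      hdM A' + B2.val = hdM A + B3.val → 
      CoreC F ((A, B) ::ₘ T) X Z := by
    intro F' K T' B2 A' hA h1 h2 B3 h3 h4 h5 h6
    rw [Multiset.rel_cons_left] at h2
    obtain ⟨⟨P, Q⟩, T0', h7, h8, rfl⟩ := h2
    have hP : P = [] := by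
      rcases h7.1 with h | h <;> simpa using h
    subst hP
    refine ⟨F', K, (A', Q) ::ₘ T0', B3, h1, Multiset.Rel.cons ⟨hA, h7.2⟩ h8, h3, h4, ?_⟩
    simp only [heads_cons, hdM_nil, zero_add] at h5 ⊢
    calc _ = hdM A' + (hdM Q + heads T0' + (K.map hdM).sum) := by abel
      _ = (hdM A' + B2.val) + (hdM B + heads T) := by rw [h5]; abel
      _ = _ := by rw [h6]; abel
  by_cases hyZ : y ∈ Z
  · obtain ⟨F', K, T', B2, h1, h2, h3, h4, h5⟩ := IH (X.erase x) (Z.erase y) (by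
      constructor
      · simpa [hdM] using nd'.1
      · intro v hv
        have := dX v (Finset.mem_of_mem_erase hv)
        simp [hdM] at this ⊢; tauto
      · intro v hv hv'
        exact dZ v (Finset.mem_of_mem_erase hv) (Finset.mem_of_mem_erase hv')
      · intro v hv hv'
        have hvy : v ≠ y := by
          rintro rfl
          rcases hv with hv | hv
          · exact nd'.2 (by simpa [hdM] using hv)
          · exact hyX (Finset.mem_of_mem_erase hv)
        have hvx : v ≠ x := by
          rintro rfl
          rcases hv with hv | hv
          · exact dX _ hx (by simp [hdM] at hv ⊢; tauto)
          · simp at hv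
        have := cov v (by simp [hdM] at hv ⊢; tauto) (by simp at hv'; tauto)
        simp [hdM] at this ⊢; tauto)
    refine fin F' K T' B2 A (Or.inl rfl) h1 h2 B2 (h3.trans (Finset.erase_subset _ _)) ?_ h5 rfl
    rw [Finset.card_erase_of_mem hx, Finset.card_erase_of_mem hyZ] at h4
    have := Finset.card_pos.2 ⟨_, hyZ⟩
    omega
  · obtain ⟨F', K, T', B2, h1, h2, h3, h4, h5⟩ := IH (insert y (X.erase x)) Z (by
      constructor
      · simpa [hdM] using nd'.1
      · intro v hv
        rw [Finset.mem_insert] at hv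
        rcases hv with rfl | hv
        · simpa [hdM] using nd'.2
        have := dX v (Finset.mem_of_mem_erase hv)
        simp [hdM] at this ⊢; tauto
      · intro v hv hv'
        rw [Finset.mem_insert] at hv
        rcases hv with rfl | hv
        · exact hyZ hv'
        exact dZ v (Finset.mem_of_mem_erase hv) hv'
      · intro v hv hv'
        have hvx : v ≠ x := by
          rintro rfl
          rcases hv with hv | hv
          · exact dX _ hx (by simp [hdM] at hv ⊢; tauto)
          · simp [hyx.symm] at hv
        have := cov v (by simp [hdM] at hv ⊢; tauto) hv'
        simp [hdM] at this ⊢; tauto)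
    have hc : (insert y (X.erase x)).card = X.card := by
      rw [Finset.card_insert_of_notMem (by simp [hyX]), Finset.card_erase_of_mem hx]
      have := Finset.card_pos.2 ⟨_, hx⟩
      omega
    rw [hc] at h4
    by_cases hyB : y ∈ B2
    · have hxB : x ∉ B2.erase y := by
        intro h
        have := h3 (Finset.mem_of_mem_erase h)
        simp [hyx.symm] at this
      refine fin F' K T' B2 A.reverse (Or.inr rfl) h1 h2 (insert x (B2.erase y)) ?_ ?_ h5 ?_
      · intro v hv
        rw [Finset.mem_insert] at hv
        rcases hv with rfl | hv
        · exact hx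
        · have := h3 (Finset.mem_of_mem_erase hv)
          rw [Finset.mem_insert] at this
          rcases this with rfl | h
          · simp at hv
          · exact Finset.mem_of_mem_erase h
      · rw [Finset.card_insert_of_notMem hxB, Finset.card_erase_of_mem hyB]
        omega
      · rw [hxA', hy, Finset.insert_val_of_notMem hxB, Finset.erase_val, Multiset.singleton_add,
          Multiset.singleton_add, Multiset.cons_swap, Multiset.cons_erase hyB]
    · refine fin F' K T' B2 A (Or.inl rfl) h1 h2 B2 ?_ h4 h5 rfl
      intro v hv
      have := h3 hv
      rw [Finset.mem_insert] at this
      rcases this with rfl | h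
      · exact absurd hv hyB
      · exact Finset.mem_of_mem_erase h

lemma core_step2 [DecidableEq V] {F : Multiset (List V)} {l : List V}
    {T : Multiset (List V × List V)} {X Z : Finset V} (h : CoreH (l ::ₘ F) T X Z) {x w : V}
    (hx : x ∈ X) (hl : ends l = {x} + {w}) {l' : List V} (hfl : flip1 l l') (hl' : hdM l' = {x})
    (IH : ∀ X' Z', CoreH F T X' Z' → CoreC F T X' Z') :
    CoreC (l ::ₘ F) T X Z := by
  obtain ⟨nd, dX, dZ, cov⟩ := h
  simp only [endsS_cons, hl] at cov
  have fin : ∀ X' Z', CoreH F T X' Z' → X' ⊆ X.erase x → X.card + Z'.card ≤ X'.card + Z.card + 2 →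
      CoreC (l ::ₘ F) T X Z := by
    intro X' Z' h hX' hc
    obtain ⟨F', K, T', B2, h1, h2, h3, h4, h5⟩ := IH X' Z' h
    have hxB : x ∉ B2 := fun h => by simpa using hX' (h3 h)
    refine ⟨F', l' ::ₘ K, T', insert x B2, ?_, h2, ?_, ?_, ?_⟩
    · rw [Multiset.add_cons]; exact Multiset.Rel.cons hfl h1
    · exact Finset.insert_subset hx ((h3.trans hX').trans (Finset.erase_subset _ _))
    · rw [Finset.card_insert_of_notMem hxB]; omega
    · rw [Multiset.map_cons, Multiset.sum_cons, hl', Finset.insert_val_of_notMem hxB,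
        ← Multiset.singleton_add]
      calc _ = {x} + (heads T' + (K.map hdM).sum) := by abel
        _ = _ := by rw [h5]; abel
  have hx0 := Finset.card_erase_of_mem hx
  have hx1 := Finset.card_pos.2 ⟨_, hx⟩
  by_cases hw : w ∈ X
  · refine fin ((X.erase x).erase w) Z ⟨nd, ?_, ?_, ?_⟩ (Finset.erase_subset _ _) ?_
    · intro v hv; simp at hv; exact dX v (by tauto)
    · intro v hv; simp at hv; exact dZ v (by tauto)
    · intro v hv hv'
      have hvx : v ≠ x := by
        rintro rfl
        rcases hv with hv | hv
        · exact dX _ hx hv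
        · simp at hv
      have hvw : v ≠ w := by
        rintro rfl
        rcases hv with hv | hv
        · exact dX _ hw hv
        · simp at hv
      have := cov v (by simp at hv ⊢; tauto) hv'
      simp at this ⊢; tauto
    · have := Finset.pred_card_le_card_erase (s := X.erase x) (a := w)
      omega
  · refine fin (X.erase x) (insert w Z) ⟨nd, ?_, ?_, ?_⟩ (Finset.Subset.refl _) ?_
    · intro v hv; simp at hv; exact dX v (by tauto)
    · intro v hv; simp at hv
      have := dZ v (by tauto)
      simp only [Finset.mem_insert, not_or]
      exact ⟨by rintro rfl; exact hw hv.2, this⟩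
    · intro v hv hv'
      have hvx : v ≠ x := by
        rintro rfl
        rcases hv with hv | hv
        · exact dX _ hx hv
        · simp at hv
      have := cov v (by simp at hv ⊢; tauto) (by simp at hv'; tauto)
      simp at this hv' ⊢; tauto
    · have := Finset.card_insert_le w Z
      omega

lemma core [DecidableEq V] : ∀ (N : ℕ) (F : Multiset (List V)) (T : Multiset (List V × List V))
    (X Z : Finset V), meas F T ≤ N → CoreH F T X Z → CoreC F T X Z := by
  intro N
  induction N using Nat.strong_induction_on with
  | _ N ih =>
  intro F T X Z hm h
  rcases X.eq_empty_or_nonempty with rfl | ⟨x, hx⟩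
  · exact ⟨F, 0, T, ∅, by simpa using rel_refl' flip1_refl F, rel_refl' flip2_refl T, by simp,
      by simp, by simp⟩
  have hcov := h.cov x (Or.inr hx) (h.dZ x hx)
  rw [Multiset.mem_add] at hcov
  have step1 : ∀ A B T0, CoreH F ((A, B) ::ₘ T0) X Z → meas F ((A, B) ::ₘ T0) ≤ N →
      x ∈ hdM A.reverse → CoreC F ((A, B) ::ₘ T0) X Z := by
    intro A B T0 h hm hxA
    refine core_step1 h hx hxA fun X' Z' h' => ?_
    have hA : 0 < A.length := by
      have := (mem_hdM hxA).1
      exact List.length_pos_iff.2 (by simpa using this)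
    refine ih (meas F (([], B) ::ₘ T0)) ?_ _ _ _ _ le_rfl h'
    refine lt_of_lt_of_le ?_ hm
    simp [meas]
    omega
  rcases hcov with hc | hc
  · obtain ⟨⟨A, B⟩, hp, hxp⟩ := mem_sum_map hc
    obtain ⟨T0, rfl⟩ := Multiset.exists_cons_of_mem hp
    rw [Multiset.mem_add] at hxp
    rcases hxp with hxp | hxp
    · exact step1 A B T0 h hm hxp
    · refine (step1 B A T0 h.swap ?_ hxp).swap
      simpa [meas, add_comm B.length] using hm
  · obtain ⟨l, hl, hxl⟩ := mem_sum_map hc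
    obtain ⟨F0, rfl⟩ := Multiset.exists_cons_of_mem hl
    have IH : ∀ X' Z', CoreH F0 T X' Z' → CoreC F0 T X' Z' := by
      intro X' Z' h'
      refine ih (meas F0 T) ?_ _ _ _ _ le_rfl h'
      refine lt_of_lt_of_le ?_ hm
      simp [meas]
    rw [ends, Multiset.mem_add] at hxl
    rcases hxl with hxl | hxl
    · have h1 := (mem_hdM hxl)
      obtain ⟨w, hw⟩ := hd_pair (A := l.reverse) (x := x) (by simpa using hxl)
      exact core_step2 h hx (w := w) (by rw [ends, h1.2, hw]) (flip1_refl l) h1.2 IH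
    · have h1 := (mem_hdM hxl)
      obtain ⟨w, hw⟩ := hd_pair hxl
      exact core_step2 h hx (w := w) (by rw [ends, h1.2, hw, add_comm]) (Or.inr rfl) h1.2 IH

/-- `D` decomposes the edge multiset `M` into paths -/
structure Dec (D : Multiset (List V)) (M : Multiset (Sym2 V)) : Prop where
  ne : ∀ l ∈ D, l ≠ []
  nd : ∀ l ∈ D, l.Nodup
  eq : edgS D = M

lemma asm_exists (a : V) : ∃ g : List V → List V × List V, ∀ l, a ∈ l → asm a (g l) = l := by
  have : ∀ l : List V, ∃ p : List V × List V, a ∈ l → asm a p = l := by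
    intro l
    by_cases h : a ∈ l
    · obtain ⟨s, t, rfl⟩ := List.append_of_mem h
      exact ⟨(s.reverse, t), fun _ => by simp [asm]⟩
    · exact ⟨([], []), fun h' => absurd h' h⟩
  choose g hg using this
  exact ⟨g, hg⟩

lemma edgS_asm (a : V) (T : Multiset (List V × List V)) :
    edgS (T.map (asm a)) = (T.map fun p => edg p.1 + edg p.2).sum + star a (heads T) := by
  induction T using Multiset.induction with
  | empty => simp [edgS, heads]
  | cons p T ih =>
    simp only [Multiset.map_cons, edgS_cons, ih, heads_cons, Multiset.sum_cons, edg_asm, star_add]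
    abel

lemma endsS_asm (a : V) (T : Multiset (List V × List V)) :
    endsS (T.map (asm a)) + heads T =
      (T.map fun p => (hdM p.1 + lstD a p.1) + (hdM p.2 + lstD a p.2)).sum := by
  induction T using Multiset.induction with
  | empty => simp [endsS, heads]
  | cons p T ih =>
    simp only [Multiset.map_cons, endsS_cons, heads_cons, Multiset.sum_cons, ends_asm, ← ih]
    abel

lemma lasts_le (a : V) (T : Multiset (List V × List V)) {v : V} (hva : v ≠ a)
    (hv : v ∈ endsS (T.map (asm a))) : v ∈ lasts T := by
  have key : ∀ A : List V, v ∈ lstD a A → v ∈ hdM A.reverse := by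
    intro A h
    by_cases hA : A = []
    · subst hA
      simp [lstD, hdM] at h
      exact absurd h hva
    · rwa [lstD_of_ne a hA] at h
  induction T using Multiset.induction with
  | empty => simp [endsS] at hv
  | cons p T ih =>
    simp only [Multiset.map_cons, endsS_cons, ends_asm, Multiset.mem_add, lasts_cons] at hv ⊢
    rcases hv with (h | h) | h
    · exact Or.inl (Or.inl (key _ h))
    · exact Or.inl (Or.inr (key _ h))
    · exact Or.inr (ih h)

lemma mem_star {a : V} {M : Multiset V} {v : V} : s(a, v) ∈ star a M ↔ v ∈ M := by
  rw [star, Multiset.mem_map]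
  constructor
  · rintro ⟨w, hw, h⟩
    rwa [← Sym2.congr_right.1 h]
  · exact fun h => ⟨v, h, rfl⟩

lemma edgS_K (a : V) (K : Multiset (List V)) :
    edgS (K.map (fun k => a :: k)) = edgS K + star a (K.map hdM).sum := by
  induction K using Multiset.induction with
  | empty => simp [edgS]
  | cons p T ih =>
    simp only [Multiset.map_cons, edgS_cons, ih, Multiset.sum_cons, edg_cons, star_add]
    abel

lemma endsS_K (a : V) (K : Multiset (List V)) (hK : ∀ k ∈ K, k ≠ []) :
    endsS (K.map (fun k => a :: k)) + (K.map hdM).sum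
      = endsS K + Multiset.replicate K.card a := by
  induction K using Multiset.induction with
  | empty => simp [endsS]
  | cons p T ih =>
    have ih := ih fun k hk => hK k (by simp [hk])
    have hp := hK p (by simp)
    have e : ends (a :: p) = {a} + hdM p.reverse := by
      rw [ends, List.reverse_cons, hdM_append_of_ne (by simpa using hp)]; rfl
    simp only [Multiset.map_cons, endsS_cons, Multiset.sum_cons, Multiset.card_cons,
      Multiset.replicate_succ, e]
    rw [← Multiset.singleton_add a]
    calc _ = {a} + (hdM p + hdM p.reverse) + (endsS (T.map (fun k => a :: k)) + (T.map hdM).sum) := by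
            abel
      _ = _ := by rw [ih]; unfold ends; abel

lemma edg_notMem {a : V} {l : List V} (h : a ∉ l) (v : V) : s(a, v) ∉ edg l := by
  induction l with
  | nil => simp [edg]
  | cons x l ih =>
    simp only [List.mem_cons, not_or] at h
    rw [edg_cons, Multiset.mem_add, not_or]
    refine ⟨?_, ih h.2⟩
    cases l with
    | nil => simp [hdM]
    | cons y t =>
      simp only [List.mem_cons, not_or] at h
      simp [hdM]
      tauto

/-- Lovász / Fan: adding edges at `a`. -/
theorem add_star [DecidableEq V] {D : Multiset (List V)} {M : Multiset (Sym2 V)} (hD : Dec D M)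
    (hM : M.Nodup) (a : V) (X : Finset V) (haX : a ∉ X) (haa : s(a, a) ∉ M)
    (hX : ∀ x ∈ X, s(a, x) ∉ M)
    (hcov : ∀ v, s(a, v) ∈ M ∨ v ∈ X → v ∈ endsS D) :
    ∃ (D' : Multiset (List V)) (B : Finset V), B ⊆ X ∧ X.card ≤ 2 * B.card ∧
      Dec D' (M + star a B.val) ∧ D'.card = D.card ∧
      endsS D' + B.val = endsS D + Multiset.replicate B.card a := by
  obtain ⟨g, hg⟩ := asm_exists a
  set F := D.filter (fun l => a ∉ l) with hF
  set T := (D.filter (fun l => a ∈ l)).map g with hT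
  have hT' : T.map (asm a) = D.filter (fun l => a ∈ l) := by
    rw [hT, Multiset.map_map]
    conv_rhs => rw [← Multiset.map_id (D.filter (fun l => a ∈ l))]
    exact Multiset.map_congr rfl fun l hl => hg l (Multiset.mem_filter.1 hl).2
  have hsplit : D = F + T.map (asm a) := by
    rw [hT', hF, add_comm]; exact (Multiset.filter_add_not _ D).symm
  have hMe : M = edgS F + ((T.map fun p => edg p.1 + edg p.2).sum + star a (heads T)) := by
    rw [← hD.eq, hsplit, edgS_add, edgS_asm]
  have hheads : ∀ v, v ∈ heads T → s(a, v) ∈ M := by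
    intro v hv
    rw [hMe]
    simp only [Multiset.mem_add]
    exact Or.inr (Or.inr (mem_star.2 hv))
  have hH : CoreH F T X ∅ := by
    constructor
    · rw [hMe] at hM
      exact Multiset.Nodup.of_map _ (Multiset.nodup_add.1 (Multiset.nodup_add.1 hM).2.1).2.1
    · intro x hx h; exact hX x hx (hheads x h)
    · simp
    · intro v hv _
      have hva : v ≠ a := by
        rintro rfl
        rcases hv with hv | hv
        · exact haa (hheads _ hv)
        · exact haX hv
      have := hcov v (hv.imp_left (hheads v))
      rw [hsplit, endsS_add, Multiset.mem_add] at this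
      rw [Multiset.mem_add]
      exact this.symm.imp_left (lasts_le a T hva)
  obtain ⟨F', K, T', B, h1, h2, h3, h4, h5⟩ := core _ F T X ∅ le_rfl hH
  have hFmem : ∀ l ∈ F, l ≠ [] ∧ l.Nodup ∧ a ∉ l := by
    intro l hl
    have := Multiset.mem_filter.1 hl
    exact ⟨hD.ne l this.1, hD.nd l this.1, this.2⟩
  have hFmem' : ∀ l ∈ F' + K, l ≠ [] ∧ l.Nodup ∧ a ∉ l := by
    intro l hl
    obtain ⟨m, hm, hr⟩ := Multiset.exists_mem_of_rel_of_mem (Multiset.rel_flip.2 h1) hl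
    have := hFmem m hm
    rcases hr with rfl | rfl
    · exact this
    · simpa using this
  have hTmem : ∀ p ∈ T, (asm a p).Nodup := by
    intro p hp
    have : asm a p ∈ T.map (asm a) := Multiset.mem_map_of_mem _ hp
    rw [hT'] at this
    exact hD.nd _ (Multiset.mem_filter.1 this).1
  have hTmem' : ∀ p ∈ T', (asm a p).Nodup := by
    intro p hp
    obtain ⟨q, hq, hr⟩ := Multiset.exists_mem_of_rel_of_mem (Multiset.rel_flip.2 h2) hp
    have hq' := hTmem q hq
    have e1 : p.1.reverse.Perm q.1.reverse := by
      rcases hr.1 with h | h <;> rw [h]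
      simp
    have e2 : p.2.Perm q.2 := by
      rcases hr.2 with h | h <;> rw [h]
      exact List.reverse_perm _
    exact ((e1.append (e2.cons a)).nodup_iff).2 hq'
  have hB : (K.map hdM).sum.card = K.card := by
    have : ∀ k ∈ K, k ≠ [] := fun k hk => (hFmem' k (by simp [hk])).1
    clear * - this
    induction K using Multiset.induction with
    | empty => simp
    | cons p T ih =>
      have hp := this p (by simp)
      have ih := ih fun k hk => this k (by simp [hk])
      simp only [Multiset.map_cons, Multiset.sum_cons, Multiset.card_add, ih, Multiset.card_cons]
      cases p with
      | nil => exact absurd rfl hp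
      | cons x t => simp [hdM, add_comm]
  have hflipEdg : ∀ l m : List V, flip1 l m → edg l = edg m := by
    rintro l m (rfl | rfl)
    · rfl
    · rw [edg_reverse]
  have hflipEnds : ∀ l m : List V, flip1 l m → ends l = ends m := by
    rintro l m (rfl | rfl)
    · rfl
    · rw [ends_reverse]
  have hflipL : ∀ l m : List V, flip1 l m → hdM l + lstD a l = hdM m + lstD a m := by
    rintro l m (rfl | rfl)
    · rfl
    · rw [lstD_flip]
  have hheadsCard : (heads T').card = (heads T).card := by
    have c : ∀ l m : List V, flip1 l m → (hdM l).card = (hdM m).card := by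
      rintro l m (rfl | rfl)
      · rfl
      · rcases l.eq_nil_or_concat with rfl | ⟨t, x, rfl⟩
        · rfl
        · cases t <;> simp [hdM]
    have : T.map (fun p => (hdM p.1).card + (hdM p.2).card)
        = T'.map (fun p => (hdM p.1).card + (hdM p.2).card) :=
      rel_map_eq (fun p q h => by rw [c _ _ h.1, c _ _ h.2]) h2
    have d : ∀ T : Multiset (List V × List V),
        (heads T).card = (T.map (fun p => (hdM p.1).card + (hdM p.2).card)).sum := by
      intro T
      induction T using Multiset.induction with
      | empty => simp [heads]
      | cons p T ih => simp [ih]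
    rw [d, d, this]
  have hKB : K.card = B.card := by
    have := congrArg Multiset.card h5
    simp only [Multiset.card_add, hB, hheadsCard] at this
    simpa using this
  have eF : edgS F = edgS F' + edgS K := by
    rw [← edgS_add]; exact congrArg Multiset.sum (rel_map_eq hflipEdg h1)
  have nF : endsS F = endsS F' + endsS K := by
    rw [← endsS_add]; exact congrArg Multiset.sum (rel_map_eq hflipEnds h1)
  refine ⟨F' + K.map (fun k => a :: k) + T'.map (asm a), B, h3, by simpa using h4,
    ⟨?_, ?_, ?_⟩, ?_, ?_⟩
  · intro l hl
    simp only [Multiset.mem_add, Multiset.mem_map] at hl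
    rcases hl with (hl | ⟨k, _, rfl⟩) | ⟨p, _, rfl⟩
    · exact (hFmem' l (by simp [hl])).1
    · simp
    · simp [asm]
  · intro l hl
    simp only [Multiset.mem_add, Multiset.mem_map] at hl
    rcases hl with (hl | ⟨k, hk, rfl⟩) | ⟨p, hp, rfl⟩
    · exact (hFmem' l (by simp [hl])).2.1
    · have := hFmem' k (by simp [hk])
      exact List.nodup_cons.2 ⟨this.2.2, this.2.1⟩
    · exact hTmem' p hp
  · have : (T.map fun p => edg p.1 + edg p.2) = (T'.map fun p => edg p.1 + edg p.2) :=
      rel_map_eq (fun p q h => by rw [hflipEdg _ _ h.1, hflipEdg _ _ h.2]) h2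
    rw [edgS_add, edgS_add, edgS_asm, edgS_K, hMe, eF, this]
    calc _ = edgS F' + edgS K + (T'.map fun p => edg p.1 + edg p.2).sum
            + star a (heads T' + (K.map hdM).sum) := by rw [star_add]; abel
      _ = _ := by rw [h5, star_add]; abel
  · rw [hsplit]
    have e1 := Multiset.card_eq_card_of_rel h1
    have e2 := Multiset.card_eq_card_of_rel h2
    simp only [Multiset.card_add, Multiset.card_map] at e1 ⊢
    omega
  · have e1 := endsS_asm a T
    have e2 := endsS_asm a T'
    have : (T.map fun p => (hdM p.1 + lstD a p.1) + (hdM p.2 + lstD a p.2))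
        = (T'.map fun p => (hdM p.1 + lstD a p.1) + (hdM p.2 + lstD a p.2)) :=
      rel_map_eq (fun p q h => by rw [hflipL _ _ h.1, hflipL _ _ h.2]) h2
    rw [this, ← e2] at e1
    have e3 := endsS_K a K (fun k hk => (hFmem' k (by simp [hk])).1)
    apply add_right_cancel (b := heads T)
    rw [hsplit, endsS_add, endsS_add, endsS_add, nF]
    calc _ = endsS F' + endsS (K.map (fun k => a :: k)) + endsS (T'.map (asm a))
          + (heads T + B.val) := by abel
      _ = endsS F' + (endsS (K.map (fun k => a :: k)) + (K.map hdM).sum)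
          + (endsS (T'.map (asm a)) + heads T') := by rw [← h5]; abel
      _ = _ := by rw [e3, ← e1, hKB]; abel

section Graph
variable [DecidableEq V]

/-- degree in an edge set -/
def deg (E : Finset (Sym2 V)) (v : V) : ℕ := (E.filter (fun e => v ∈ e)).card

/-- star as a finset -/
def starF (a : V) (X : Finset V) : Finset (Sym2 V) := X.image (fun v => s(a, v))

lemma starF_val (a : V) (X : Finset V) : (starF a X).val = star a X.val := by
  rw [starF, Finset.image_val_of_injOn]
  · rfl
  · intro x _ y _ h
    exact Sym2.congr_right.1 h

lemma mem_starF {a : V} {X : Finset V} {v : V} : s(a, v) ∈ starF a X ↔ v ∈ X := by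
  rw [← Finset.mem_val, starF_val, mem_star, Finset.mem_val]

lemma deg_starF {a : V} {X : Finset V} (ha : a ∉ X) (v : V) :
    deg (starF a X) v = if v = a then X.card else if v ∈ X then 1 else 0 := by
  have inj : Function.Injective (fun v => s(a, v)) := fun x y h => Sym2.congr_right.1 h
  rw [deg, starF, Finset.filter_image, Finset.card_image_of_injective _ inj]
  split_ifs with h1 h2
  · subst h1
    congr 1
    apply Finset.filter_true_of_mem
    simp
  · rw [Finset.card_eq_one]
    refine ⟨v, ?_⟩
    ext w
    simp only [Finset.mem_filter, Sym2.mem_iff, h1, false_or, Finset.mem_singleton]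
    constructor
    · exact fun h => h.2.symm
    · rintro rfl; exact ⟨h2, rfl⟩
  · rw [Finset.card_eq_zero]
    ext w
    simp only [Finset.mem_filter, Sym2.mem_iff, h1, false_or, Finset.notMem_empty, iff_false]
    rintro ⟨h, rfl⟩
    exact h2 h

lemma deg_union {E F : Finset (Sym2 V)} (h : Disjoint E F) (v : V) :
    deg (E ∪ F) v = deg E v + deg F v := by
  rw [deg, Finset.filter_union, Finset.card_union_of_disjoint]
  · rfl
  · exact Finset.disjoint_filter_filter h

lemma deg_pos {E : Finset (Sym2 V)} {v w : V} (h : s(v, w) ∈ E) : deg E v ≠ 0 := by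
  rw [deg, Finset.card_ne_zero]
  exact ⟨_, Finset.mem_filter.2 ⟨h, by simp⟩⟩

lemma exists_of_deg {E : Finset (Sym2 V)} {v : V} (h : deg E v ≠ 0) : ∃ w, s(v, w) ∈ E := by
  rw [deg, Finset.card_ne_zero] at h
  obtain ⟨e, he⟩ := h
  rw [Finset.mem_filter] at he
  obtain ⟨w, rfl⟩ := he.2
  exact ⟨w, he.1⟩

/-- Removing a star. -/
lemma rem_star {E : Finset (Sym2 V)} (a : V) (X : Finset V) (haX : a ∉ X)
    (hX : ∀ x ∈ X, s(a, x) ∈ E) :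
    (E \ starF a X).val + star a X.val = E.val ∧ 
    (∀ v, deg E v = deg (E \ starF a X) v + if v = a then X.card else if v ∈ X then 1 else 0) := by
  have hsub : starF a X ⊆ E := by
    intro e he
    rw [starF, Finset.mem_image] at he
    obtain ⟨x, hx, rfl⟩ := he
    exact hX x hx
  have hd : Disjoint (E \ starF a X) (starF a X) := Finset.sdiff_disjoint
  have hu : (E \ starF a X) ∪ starF a X = E := Finset.sdiff_union_of_subset hsub
  constructor
  · rw [← starF_val]
    conv_rhs => rw [← hu]
    rw [← Finset.disjUnion_eq_union _ _ hd]
    rfl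
  · intro v
    conv_lhs => rw [← hu]
    rw [deg_union hd, deg_starF haX]

lemma dec_trivial [Fintype V] (d : V → ℕ) (hd : ∀ v, Even (d v)) :
    ∃ D : Multiset (List V), Dec D 0 ∧ ∀ v, (endsS D).count v = d v := by
  refine ⟨∑ v, Multiset.replicate (d v / 2) [v], ⟨?_, ?_, ?_⟩, ?_⟩
  · intro l hl
    simp only [Multiset.mem_sum, Multiset.mem_replicate] at hl
    obtain ⟨v, _, _, rfl⟩ := hl
    simp
  · intro l hl
    simp only [Multiset.mem_sum, Multiset.mem_replicate] at hl
    obtain ⟨v, _, _, rfl⟩ := hl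
    simp
  · rw [edgS, Multiset.sum_eq_zero]
    intro x hx
    rw [Multiset.mem_map] at hx
    obtain ⟨l, hl, rfl⟩ := hx
    simp only [Multiset.mem_sum, Multiset.mem_replicate] at hl
    obtain ⟨v, _, _, rfl⟩ := hl
    rfl
  · intro v
    have key : ∀ S : Finset V, endsS (∑ v ∈ S, Multiset.replicate (d v / 2) [v])
        = ∑ v ∈ S, Multiset.replicate (d v) v := by
      intro S
      induction S using Finset.induction_on with
      | empty => simp [endsS]
      | insert a S ha ih =>
        rw [Finset.sum_insert ha, Finset.sum_insert ha, endsS_add, ih]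
        congr 1
        obtain ⟨k, hk⟩ := hd a
        rw [hk, show (k + k) / 2 = k by omega]
        have e : ends [a] = {a} + {a} := rfl
        rw [endsS, Multiset.map_replicate, Multiset.sum_replicate, e, nsmul_add,
          Multiset.nsmul_singleton, Multiset.replicate_add]
    rw [key, Multiset.count_sum']
    simp [Multiset.count_replicate]

/-- Theorem L -/
theorem lovasz [Fintype V] : ∀ (N : ℕ) (E : Finset (Sym2 V)) (_ : E.card = N)
    (_ : ∀ e ∈ E, ¬ e.IsDiag) (d : V → ℕ) (_ : ∀ v, d v % 2 = deg E v % 2)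
    (_ : ∀ x y, d x = 0 → d y = 0 → deg E x ≠ 0 → deg E y ≠ 0 → x = y),
    ∃ D : Multiset (List V), Dec D E.val ∧ ∀ v, (endsS D).count v = d v := by
  intro N
  induction N with
  | zero =>
    intro E hE _ d hd _
    rw [Finset.card_eq_zero] at hE
    subst hE
    obtain ⟨D, h1, h2⟩ := dec_trivial d (fun v => by
      rw [Nat.even_iff, hd]; simp [deg])
    exact ⟨D, h1, h2⟩
  | succ N ih =>
    intro E hE hl d hd hz
    have : ∃ x y, s(x, y) ∈ E ∧ ∀ v, d v = 0 → deg E v ≠ 0 → v = x := by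
      by_cases h : ∃ x, d x = 0 ∧ deg E x ≠ 0
      · obtain ⟨x, hx, hx'⟩ := h
        obtain ⟨y, hy⟩ := exists_of_deg hx'
        exact ⟨x, y, hy, fun v h1 h2 => hz v x h1 hx h2 hx'⟩
      · have : E.Nonempty := Finset.card_pos.1 (by omega)
        obtain ⟨e, he⟩ := this
        induction e using Sym2.ind with
        | _ x y => 
          push Not at h
          exact ⟨x, y, he, fun v h1 h2 => absurd (h v h1) h2⟩
    obtain ⟨x, y, hxy, hx⟩ := this
    have hne : x ≠ y := fun h => hl _ hxy (by simpa using h)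
    have hyx : s(y, x) ∈ E := by rw [Sym2.eq_swap]; exact hxy
    have hdy : d y ≠ 0 := fun h => hne (hx y h (deg_pos hyx)).symm
    obtain ⟨hval, hdeg⟩ := rem_star (E := E) y {x} (by simpa using hne.symm) (by simpa using hyx)
    set H := E \ starF y {x} with hH
    have hHE : ∀ e ∈ H, e ∈ E := fun e he => (Finset.mem_sdiff.1 he).1
    have hnot : s(y, x) ∉ H := fun h => (Finset.mem_sdiff.1 h).2 (mem_starF.2 (by simp))
    have hcard : H.card = N := by
      have := congrArg Multiset.card hval
      simp [star] at this
      omega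
    obtain ⟨D, hD, hcnt⟩ := ih H hcard (fun e he => hl e (hHE e he))
      (fun v => if v = x then d v + 1 else if v = y then d v - 1 else d v) (by
        intro v
        have h1 := hdeg v
        have h2 := hd v
        by_cases hvx : v = x
        · subst hvx
          simp [hne] at h1 ⊢
          omega
        · by_cases hvy : v = y
          · subst hvy
            simp [hvx] at h1 ⊢
            omega
          · simp [hvx, hvy] at h1 ⊢
            omega) (by
        have : ∀ v, (if v = x then d v + 1 else if v = y then d v - 1 else d v) = 0 → deg H v ≠ 0 →
            v = y := by
          intro v h1 h2
          by_contra hvy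
          by_cases hvx : v = x
          · simp [hvx] at h1
          · simp [hvx, hvy] at h1
            have := hdeg v
            exact hvx (hx v h1 (by omega))
        intro v w h1 h2 h3 h4
        rw [this v h1 h3, this w h2 h4])
    obtain ⟨D', B, hB, hBc, hD', _, hends⟩ := add_star hD H.nodup y {x} (by simpa using hne.symm)
      (fun h => hl _ (hHE _ h) (by simp)) (by simpa using hnot) (by
        intro v hv
        rw [← Multiset.one_le_count_iff_mem, hcnt]
        have hvE : s(y, v) ∈ E := by
          rcases hv with hv | hv
          · exact hHE _ hv
          · rw [Finset.mem_singleton] at hv; rwa [hv]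
        have hvy : v ≠ y := by
          rintro rfl; exact hl _ hvE (by simp)
        by_cases hvx : v = x
        · simp [hvx]
        · simp only [hvx, hvy, if_false]
          by_contra h
          refine hvx (hx v (by omega) (deg_pos (w := y) ?_))
          rw [Sym2.eq_swap]; exact hvE)
    have hBx : B = {x} := by
      rcases Finset.subset_singleton_iff.1 hB with rfl | h
      · simp at hBc
      · exact h
    subst hBx
    rw [hval] at hD'
    refine ⟨D', hD', fun v => ?_⟩
    have := congrArg (Multiset.count v) hends
    simp [hcnt, Multiset.count_singleton] at this
    by_cases hvx : v = x
    · subst hvx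
      simp [hne] at this ⊢
      omega
    · by_cases hvy : v = y
      · subst hvy
        simp [hvx] at this ⊢
        omega
      · simp [hvx, hvy] at this ⊢
        omega

lemma card_endsS {D : Multiset (List V)} (h : ∀ l ∈ D, l ≠ []) : (endsS D).card = 2 * D.card := by
  induction D using Multiset.induction with
  | empty => simp [endsS]
  | cons p T ih =>
    have := ih fun k hk => h k (by simp [hk])
    rw [endsS_cons, Multiset.card_add, this, card_ends (h p (by simp)), Multiset.card_cons]
    ring

lemma dec_star (a : V) : ∀ (N : ℕ) (Y : Finset V), Y.card ≤ N → a ∉ Y →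
    ∃ D : Multiset (List V), Dec D (star a Y.val) ∧ 2 * D.card ≤ Y.card + 1 := by
  intro N
  induction N using Nat.strong_induction_on with
  | _ N ih =>
  intro Y hN ha
  rcases Y.eq_empty_or_nonempty with rfl | ⟨y, hy⟩
  · exact ⟨0, ⟨by simp, by simp, by simp [edgS]⟩, by simp⟩
  have hya : y ≠ a := by rintro rfl; exact ha hy
  have hc := Finset.card_erase_add_one hy
  have e1 : Y.val = {y} + (Y.erase y).val := by
    rw [Finset.erase_val, Multiset.singleton_add, Multiset.cons_erase hy]
  rcases (Y.erase y).eq_empty_or_nonempty with h0 | ⟨z, hz⟩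
  · refine ⟨{[y, a]}, ⟨by simp, by simpa using hya, ?_⟩, ?_⟩
    · rw [e1, h0]; simp [edgS, edg, star, Sym2.eq_swap]
    · rw [Multiset.card_singleton]; omega
  · have hza : z ≠ a := by rintro rfl; exact ha (Finset.mem_of_mem_erase hz)
    have hzy : z ≠ y := (Finset.mem_erase.1 hz).1
    have hc' := Finset.card_erase_add_one hz
    have e2 : (Y.erase y).val = {z} + ((Y.erase y).erase z).val := by
      rw [Finset.erase_val (Y.erase y), Multiset.singleton_add, Multiset.cons_erase hz]
    obtain ⟨D, hD, hDc⟩ := ih _ (show ((Y.erase y).erase z).card < N by omega)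
      ((Y.erase y).erase z) le_rfl (by simp [ha])
    refine ⟨[y, a, z] ::ₘ D, ⟨?_, ?_, ?_⟩, ?_⟩
    · intro l hl
      rcases Multiset.mem_cons.1 hl with rfl | hl
      · simp
      · exact hD.ne l hl
    · intro l hl
      rcases Multiset.mem_cons.1 hl with rfl | hl
      · simp [hya, hza.symm, hzy.symm]
      · exact hD.nd l hl
    · rw [edgS_cons, hD.eq, e1, e2, star_add, star_add]
      simp [edg, Sym2.eq_swap (a := y), Multiset.singleton_add]
      exact Multiset.cons_swap _ _ _
    · simp; omega

/-- adding leftover edges `z y` at the centres `y`. -/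
lemma add_iter (z : V) (Y : Finset V) : ∀ (D : Multiset (List V)) (M : Multiset (Sym2 V)),
    Dec D M → (M + star z Y.val).Nodup → z ∉ Y → (∀ y ∈ Y, s(y, y) ∉ M) →
    (∀ y ∈ Y, ∀ v, v ≠ z → s(y, v) ∈ M → v ∈ endsS D) → Y.card ≤ (endsS D).count z →
    ∃ D' : Multiset (List V), Dec D' (M + star z Y.val) ∧ D'.card = D.card ∧
      endsS D' + Multiset.replicate Y.card z = endsS D + Y.val := by
  induction Y using Finset.induction_on with
  | empty =>
    intro D M hD _ _ _ _ _
    exact ⟨D, by simpa using hD, rfl, by simp⟩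
  | insert y Y hyY ih =>
    intro D M hD hnd hz hdiag hcov hcnt
    rw [Finset.insert_val_of_notMem hyY, ← Multiset.singleton_add, star_add, ← add_assoc] at hnd ⊢
    have hzy : z ≠ y := by rintro rfl; simp at hz
    have hzY : z ∉ Y := fun h => hz (by simp [h])
    rw [Finset.card_insert_of_notMem hyY] at hcnt ⊢
    have hnd1 := (Multiset.nodup_add.1 (Multiset.nodup_add.1 hnd).1)
    have hyz : s(y, z) ∉ M := by
      intro h
      rw [Sym2.eq_swap] at h
      exact Multiset.disjoint_left.1 hnd1.2.2 h (by simp)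
    obtain ⟨D1, B, hB, hBc, hD1, hc1, he1⟩ := add_star hD hnd1.1 y {z} (by simpa using hzy.symm)
      (hdiag y (by simp)) (by simpa using hyz) (by
        intro v hv
        by_cases hvz : v = z
        · rw [hvz, ← Multiset.one_le_count_iff_mem]; omega
        · rcases hv with hv | hv
          · exact hcov y (by simp) v hvz hv
          · simp [hvz] at hv)
    have hBx : B = {z} := by
      rcases Finset.subset_singleton_iff.1 hB with rfl | h
      · simp at hBc
      · exact h
    subst hBx
    have hst : star y ({z} : Finset V).val = star z {y} := by
      simp [star, Sym2.eq_swap]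
    rw [hst] at hD1
    simp only [Finset.singleton_val, Finset.card_singleton, Multiset.replicate_one] at he1
    obtain ⟨D2, hD2, hc2, he2⟩ := ih D1 (M + star z {y}) hD1 hnd hzY (by
        intro y' hy' h
        rw [Multiset.mem_add] at h
        rcases h with h | h
        · exact hdiag y' (by simp [hy']) h
        · simp at h
          have : y' ≠ z := by rintro rfl; exact hzY hy'
          tauto) (by
        intro y' hy' v hv h
        have hyz' : y' ≠ z := by rintro rfl; exact hzY hy'
        have hyy' : y' ≠ y := by rintro rfl; exact hyY hy'
        rw [Multiset.mem_add] at h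
        rcases h with h | h
        · have := hcov y' (by simp [hy']) v hv h
          have h2 : v ∈ endsS D1 + {z} := by rw [he1]; simp [this]
          simpa [hv] using h2
        · simp at h
          tauto) (by
        have := congrArg (Multiset.count z) he1
        simp [Multiset.count_singleton, hzy] at this
        omega)
    refine ⟨D2, hD2, hc2.trans hc1, ?_⟩
    rw [Multiset.replicate_succ, ← Multiset.singleton_add]
    calc _ = (endsS D2 + Multiset.replicate Y.card z) + {z} := by abel
      _ = (endsS D1 + {z}) + Y.val := by rw [he2]; abel
      _ = _ := by rw [he1]; abel

/-- weights -/
def wt (E : Finset (Sym2 V)) (R : Finset V) (v : V) : ℕ :=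
  if deg E v % 2 = 1 then 2 else if v ∈ R then 4 else if deg E v = 0 then 0 else 3

/-- good vertices -/
def Good (E : Finset (Sym2 V)) (R : Finset V) (v : V) : Prop := deg E v % 2 = 1 ∨ v ∈ R

/-- the inductive claim -/
def Claim [Fintype V] (E : Finset (Sym2 V)) (R : Finset V) : Prop :=
  ∃ D : Multiset (List V), Dec D E.val ∧ 4 * D.card ≤ ∑ v, wt E R v ∧
    ∀ v, Good E R v → v ∈ endsS D

lemma claim_base [Fintype V] {E : Finset (Sym2 V)} (hl : ∀ e ∈ E, ¬ e.IsDiag) {R : Finset V}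
    (h : ∀ v, Good E R v ∨ deg E v = 0) : Claim E R := by
  let d : V → ℕ := fun v => if deg E v % 2 = 1 then 1 else if v ∈ R then 2 else 0
  have hd0 : ∀ v, d v = 0 → deg E v = 0 := by
    intro v hv
    rcases h v with (h | h) | h
    · simp [d, h] at hv
    · by_contra
      simp only [d, h] at hv
      split_ifs at hv
    · exact h
  obtain ⟨D, hD, hc⟩ := lovasz _ E rfl hl d (by
    intro v
    simp only [d]
    split_ifs <;> omega) (fun x y h1 _ h3 _ => absurd (hd0 x h1) h3)
  refine ⟨D, hD, ?_, ?_⟩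
  · have h1 := card_endsS hD.ne
    rw [← Multiset.sum_count_eq_card (s := Finset.univ) (by simp)] at h1
    have h2 : ∑ v, wt E R v = 2 * ∑ v, d v := by
      rw [Finset.mul_sum]
      refine Finset.sum_congr rfl fun v _ => ?_
      have := h v
      simp only [wt, d, Good] at this ⊢
      split_ifs <;> first | rfl | (exfalso; tauto)
    simp only [hc] at h1
    omega
  · intro v hv
    rw [← Multiset.one_le_count_iff_mem, hc]
    simp only [d, Good] at hv ⊢
    split_ifs <;> first | omega | tauto

lemma sum_ind [Fintype V] (X : Finset V) : ∑ v, (if v ∈ X then 1 else 0) = X.card := by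
  simp

lemma claim_case1 [Fintype V] {E : Finset (Sym2 V)} (hl : ∀ e ∈ E, ¬ e.IsDiag) {R : Finset V}
    (IH : ∀ E' : Finset (Sym2 V), E' ⊆ E → E'.card < E.card → ∀ R', Claim E' R')
    {a b : V} (ha : ¬ Good E R a) (hb : ¬ Good E R b) (hab : s(a, b) ∈ E) : Claim E R := by
  classical
  set X0 : Finset V := Finset.univ.filter (fun v => s(a, v) ∈ E ∧ ¬ Good E R v) with hX0
  have hX0p : 0 < X0.card := Finset.card_pos.2 ⟨b, by simp [hX0, hab, hb]⟩
  -- choose the set of removed neighbours and of marked neighbours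
  have hch : ∃ X C : Finset V, X ⊆ X0 ∧ X0 \ X = C ∧ C ⊆ X0 ∧
      X.card + C.card = X0.card ∧ ((C.card = 0 ∧ X0.card % 4 ≠ 2) ∨
        (C.card = 1 ∧ X0.card % 4 = 2)) := by
    by_cases h : X0.card % 4 = 2
    · obtain ⟨c, hc⟩ := Finset.card_pos.1 hX0p
      refine ⟨X0.erase c, {c}, Finset.erase_subset _ _, ?_, by simpa using hc, ?_, Or.inr ⟨by simp, h⟩⟩
      · ext v; simp; constructor
        · intro h; by_contra h'; exact h' (by tauto)
        · rintro rfl; tauto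
      · simpa using Finset.card_erase_add_one hc
    · exact ⟨X0, ∅, subset_rfl, by simp, by simp, by simp, Or.inl ⟨by simp, h⟩⟩
  obtain ⟨X, C, hXX0, hC, hCX0, hXC, hcase⟩ := hch
  have hXp : 0 < X.card := by omega
  have hXE : ∀ x ∈ X, s(a, x) ∈ E := fun x hx => by
    have := hXX0 hx; simp [hX0] at this; exact this.1
  have hXb : ∀ x ∈ X, ¬ Good E R x := fun x hx => by
    have := hXX0 hx; simp [hX0] at this; exact this.2
  have hCb : ∀ x ∈ C, ¬ Good E R x := fun x hx => by
    have := hCX0 hx; simp [hX0] at this; exact this.2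
  have hCE : ∀ x ∈ C, s(a, x) ∈ E := fun x hx => by
    have := hCX0 hx; simp [hX0] at this; exact this.1
  have hCX : ∀ x ∈ C, x ∉ X := fun x hx => by
    rw [← hC, Finset.mem_sdiff] at hx; exact hx.2
  have haa : s(a, a) ∉ E := fun h => hl _ h (by simp)
  have haX : a ∉ X := fun h => haa (hXE a h)
  have haC : a ∉ C := fun h => haa (hCE a h)
  obtain ⟨hval, hdeg⟩ := rem_star (E := E) a X haX hXE
  set H := E \ starF a X with hH
  have hHE : H ⊆ E := Finset.sdiff_subset
  have hcard : H.card < E.card := by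
    have := congrArg Multiset.card hval
    simp [star] at this
    omega
  obtain ⟨D, hD, hDc, hDg⟩ := IH H hHE hcard (R ∪ C)
  have hgood : ∀ v, s(a, v) ∈ E → v ∈ endsS D := by
    intro v hv
    apply hDg
    have hva : v ≠ a := by rintro rfl; exact haa hv
    have h1 := hdeg v
    simp only [hva, if_false] at h1
    by_cases hvX : v ∈ X
    · have := hXb v hvX
      simp only [hvX, if_true, Good] at h1 this ⊢
      left; omega
    · simp only [hvX, if_false] at h1
      by_cases hg : Good E R v
      · simp only [Good, Finset.mem_union] at hg ⊢
        rcases hg with hg | hg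
        · left; omega
        · tauto
      · right
        have : v ∈ X0 := by simp [hX0, hv, hg]
        rw [Finset.mem_union]; right
        rw [← hC, Finset.mem_sdiff]; exact ⟨this, hvX⟩
  obtain ⟨D1, B, hBX, hBc, hD1, hc1, he1⟩ := add_star hD H.nodup a X haX (fun h => haa (hHE h))
    (fun x hx h => (Finset.mem_sdiff.1 h).2 (mem_starF.2 hx))
    (fun v hv => hgood v (hv.elim (fun h => hHE h) (hXE v)))
  obtain ⟨D2, hD2, hc2⟩ := dec_star a _ (X \ B) le_rfl (fun h => haX (Finset.mem_sdiff.1 h).1)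
  have hXB : B.val + (X \ B).val = X.val := by
    have h := Finset.disjUnion_eq_union B (X \ B) Finset.disjoint_sdiff
    rw [Finset.union_sdiff_of_subset hBX] at h
    exact congrArg Finset.val h
  have hXBc : (X \ B).card + B.card = X.card := Finset.card_sdiff_add_card_eq_card hBX
  refine ⟨D1 + D2, ⟨?_, ?_, ?_⟩, ?_, ?_⟩
  · intro l h
    rcases Multiset.mem_add.1 h with h | h
    · exact hD1.ne l h
    · exact hD2.ne l h
  · intro l h
    rcases Multiset.mem_add.1 h with h | h
    · exact hD1.nd l h
    · exact hD2.nd l h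
  · rw [edgS_add, hD1.eq, hD2.eq, ← hval, ← hXB, star_add, add_assoc]
  · have hsum : ∑ v, (wt H (R ∪ C) v + (if v ∈ X then 1 else 0) + (if v = a then X.card % 2 else 0))
        ≤ ∑ v, (wt E R v + if v ∈ C then 1 else 0) := by
      refine Finset.sum_le_sum fun v _ => ?_
      have h1 := hdeg v
      by_cases hva : v = a
      · subst hva
        have hd0 := deg_pos hab
        simp only [Good, not_or] at ha
        simp only [wt, if_true, haX, haC, if_false, ha, Finset.mem_union, or_self] at h1 ⊢
        rcases Nat.mod_two_eq_zero_or_one X.card with h | h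
        · split_ifs <;> omega
        · rw [if_pos (by omega)]
          simp [hd0, h]
      · simp only [hva, if_false] at h1 ⊢
        by_cases hvX : v ∈ X
        · have hvC : v ∉ C := fun h => hCX v h hvX
          have hg := hXb v hvX
          have hd0 : deg E v ≠ 0 := by
            have := hXE v hvX
            rw [Sym2.eq_swap] at this; exact deg_pos this
          simp only [Good, not_or] at hg
          simp only [hvX, if_true] at h1
          simp only [wt, hvX, hvC, hg, hd0, if_true, if_false]
          rw [if_pos (by omega)]
        · simp only [hvX, if_false, add_zero] at h1 ⊢
          by_cases hvC : v ∈ C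
          · have hg := hCb v hvC
            have hd0 : deg E v ≠ 0 := by
              have := hCE v hvC
              rw [Sym2.eq_swap] at this; exact deg_pos this
            simp only [Good, not_or] at hg
            simp only [wt, ← h1, hvC, hg, hd0, if_false, if_true, Finset.mem_union, or_true]
            omega
          · simp [wt, ← h1, hvC]
    simp only [Finset.sum_add_distrib, sum_ind, Finset.sum_ite_eq', Finset.mem_univ, if_true] at hsum
    rw [Multiset.card_add, hc1]
    omega
  · intro v hv
    have hva : v ≠ a := by rintro rfl; exact ha hv
    have hvX : v ∉ X := fun h => hXb v h hv
    have h1 := hdeg v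
    simp only [hva, hvX, if_false] at h1
    have : v ∈ endsS D := hDg v (by
      simp only [Good, Finset.mem_union] at hv ⊢
      rw [h1] at hv; tauto)
    have h2 : v ∈ endsS D1 + B.val := by rw [he1]; simp [this]
    have h3 : v ∉ B := fun h => hvX (hBX h)
    rw [endsS_add, Multiset.mem_add]
    left
    simpa [h3] using h2

lemma claim_case2 [Fintype V] {E : Finset (Sym2 V)} (hl : ∀ e ∈ E, ¬ e.IsDiag) {R : Finset V}
    (IH : ∀ E' : Finset (Sym2 V), E' ⊆ E → E'.card < E.card → ∀ R', Claim E' R')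
    (hF : ∀ a b, s(a, b) ∈ E → ¬ Good E R a → Good E R b)
    {z b : V} (hz : Good E R z) (hb : ¬ Good E R b) (hzb : s(z, b) ∈ E) : Claim E R := by
  classical
  set X : Finset V := Finset.univ.filter (fun v => s(z, v) ∈ E ∧ ¬ Good E R v) with hX
  have hXp : 0 < X.card := Finset.card_pos.2 ⟨b, by simp [hX, hzb, hb]⟩
  have hXE : ∀ x ∈ X, s(z, x) ∈ E := fun x hx => by simp [hX] at hx; exact hx.1
  have hXb : ∀ x ∈ X, ¬ Good E R x := fun x hx => by simp [hX] at hx; exact hx.2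
  have hzz : ∀ z, s(z, z) ∉ E := fun z h => hl _ h (by simp)
  have hzX : z ∉ X := fun h => hzz z (hXE z h)
  obtain ⟨hval, hdeg⟩ := rem_star (E := E) z X hzX hXE
  set H := E \ starF z X with hH
  have hHE : H ⊆ E := Finset.sdiff_subset
  have hcard : H.card < E.card := by
    have := congrArg Multiset.card hval
    simp [star] at this
    omega
  set R' := if X.card % 2 = 1 then R.erase z else R with hR'
  have hR'v : ∀ v, v ≠ z → (v ∈ R' ↔ v ∈ R) := by
    intro v hv
    rw [hR']; split_ifs <;> simp [hv]
  obtain ⟨D, hD, hDc, hDg⟩ := IH H hHE hcard R'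
  have hgood0 : ∀ v, v ≠ z → v ∉ X → Good E R v → v ∈ endsS D := by
    intro v hvz hvX hg
    apply hDg
    have h1 := hdeg v
    simp only [hvz, hvX, if_false] at h1
    simp only [Good, hR'v v hvz] at hg ⊢
    rw [h1] at hg; exact hg
  have hgood : ∀ v, s(z, v) ∈ E → v ∈ endsS D := by
    intro v hv
    have hva : v ≠ z := by rintro rfl; exact hzz _ hv
    have h1 := hdeg v
    simp only [hva, if_false] at h1
    by_cases hvX : v ∈ X
    · have := hXb v hvX
      apply hDg
      simp only [hvX, if_true, Good] at h1 this ⊢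
      left; omega
    · refine hgood0 v hva hvX ?_
      by_contra hg
      exact hvX (by simp [hX, hv, hg])
  obtain ⟨D1, B, hBX, hBc, hD1, hc1, he1⟩ := add_star hD H.nodup z X hzX (fun h => hzz _ (hHE h))
    (fun x hx h => (Finset.mem_sdiff.1 h).2 (mem_starF.2 hx))
    (fun v hv => hgood v (hv.elim (fun h => hHE h) (hXE v)))
  have hXB : B.val + (X \ B).val = X.val := by
    have h := Finset.disjUnion_eq_union B (X \ B) Finset.disjoint_sdiff
    rw [Finset.union_sdiff_of_subset hBX] at h
    exact congrArg Finset.val h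
  have hXBc : (X \ B).card + B.card = X.card := Finset.card_sdiff_add_card_eq_card hBX
  have hval' : H.val + star z B.val + star z (X \ B).val = E.val := by
    rw [← hval, ← hXB, star_add, add_assoc]
  have hzB : z ∉ B := fun h => hzX (hBX h)
  have hcz := congrArg (Multiset.count z) he1
  rw [Multiset.count_add, Multiset.count_add, Multiset.count_replicate_self,
    Multiset.count_eq_zero_of_notMem (show z ∉ B.val from hzB)] at hcz
  have hsubE : ∀ e, e ∈ H.val + star z B.val → e ∈ E := by
    intro e he
    rw [← Finset.mem_val, ← hval']; exact Multiset.mem_add.2 (Or.inl he)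
  have hgood1 : ∀ v, v ≠ z → v ∉ X → Good E R v → v ∈ endsS D1 := by
    intro v h1 h2 h3
    have h4 : v ∈ endsS D1 + B.val := by rw [he1]; simp [hgood0 v h1 h2 h3]
    have h5 : v ∉ B := fun h => h2 (hBX h)
    simpa [h5] using h4
  obtain ⟨D2, hD2, hc2, he2⟩ := add_iter z (X \ B) D1 _ hD1 (by rw [hval']; exact E.nodup)
    (fun h => hzX (Finset.mem_sdiff.1 h).1) (fun y _ h => hzz y (hsubE _ h)) (by
      intro y hy v hvz hv
      have hyX := (Finset.mem_sdiff.1 hy).1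
      have hg := hF y v (hsubE _ hv) (hXb y hyX)
      exact hgood1 v hvz (fun h => hXb v h hg) hg) (by omega)
  rw [hval'] at hD2
  refine ⟨D2, hD2, ?_, ?_⟩
  · have hsum : ∑ v, (wt H R' v + (if v ∈ X then 1 else 0))
        ≤ ∑ v, (wt E R v + if v = z then X.card % 2 else 0) := by
      refine Finset.sum_le_sum fun v _ => ?_
      have h1 := hdeg v
      by_cases hva : v = z
      · subst hva
        have hd0 := deg_pos hzb
        simp only [if_true] at h1
        simp only [if_true, hzX, if_false]
        rcases Nat.mod_two_eq_zero_or_one X.card with h | h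
        · have : R' = R := by rw [hR', if_neg (by omega)]
          rw [this, h]
          simp only [Good] at hz
          have e : deg H v % 2 = deg E v % 2 := by omega
          simp only [wt, e]
          split_ifs <;> first | omega | tauto
        · have : v ∉ R' := by rw [hR', if_pos h]; simp
          rw [h]
          simp only [wt, this, if_false]
          simp only [Good] at hz
          split_ifs <;> first | omega | tauto
      · simp only [hva, if_false] at h1 ⊢
        by_cases hvX : v ∈ X
        · have hg := hXb v hvX
          have hd0 : deg E v ≠ 0 := by
            have := hXE v hvX
            rw [Sym2.eq_swap] at this; exact deg_pos this
          simp only [Good, not_or] at hg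
          simp only [hvX, if_true] at h1
          simp only [wt, hvX, hg, hd0, if_true, if_false]
          rw [if_pos (by omega)]
        · simp only [hvX, if_false, add_zero] at h1 ⊢
          simp only [wt, ← h1, hR'v v hva]
          exact le_rfl
    simp only [Finset.sum_add_distrib, sum_ind, Finset.sum_ite_eq', Finset.mem_univ, if_true] at hsum
    omega
  · intro v hv
    by_cases hvz : v = z
    · subst hvz
      have h2 := congrArg (Multiset.count v) he2
      have h3 : v ∉ (X \ B).val := fun h => hzX (Finset.mem_sdiff.1 h).1
      rw [Multiset.count_add, Multiset.count_add, Multiset.count_replicate_self,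
        Multiset.count_eq_zero_of_notMem h3] at h2
      rw [← Multiset.one_le_count_iff_mem]
      rcases Nat.mod_two_eq_zero_or_one X.card with h | h
      · have h4 : v ∈ endsS D := hDg v (by
          have : R' = R := by rw [hR', if_neg (by omega)]
          have h1 := hdeg v
          simp only [if_true] at h1
          simp only [Good, this] at hv ⊢
          rcases hv with hv | hv
          · left; omega
          · exact Or.inr hv)
        rw [← Multiset.one_le_count_iff_mem] at h4
        omega
      · omega
    · have := hgood1 v hvz (fun h => hXb v h hv) hv
      have h2 : v ∈ endsS D2 + Multiset.replicate (X \ B).card z := by rw [he2]; simp [this]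
      rw [Multiset.mem_add, Multiset.mem_replicate] at h2
      tauto

theorem claim_all [Fintype V] : ∀ (N : ℕ) (E : Finset (Sym2 V)), E.card = N →
    (∀ e ∈ E, ¬ e.IsDiag) → ∀ R, Claim E R := by
  intro N
  induction N using Nat.strong_induction_on with
  | _ N ih =>
  intro E hE hl R
  have IH : ∀ E' : Finset (Sym2 V), E' ⊆ E → E'.card < E.card → ∀ R', Claim E' R' :=
    fun E' h1 h2 R' => ih _ (hE ▸ h2) E' rfl (fun e he => hl e (h1 he)) R'
  by_cases h0 : ∀ v, Good E R v ∨ deg E v = 0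
  · exact claim_base hl h0
  push Not at h0
  obtain ⟨a, ha, hda⟩ := h0
  by_cases h1 : ∀ a b, s(a, b) ∈ E → ¬ Good E R a → Good E R b
  · obtain ⟨z, hz⟩ := exists_of_deg hda
    have hz' := hz
    rw [Sym2.eq_swap] at hz'
    exact claim_case2 hl IH h1 (h1 a z hz ha) ha hz'
  · push Not at h1
    obtain ⟨x, y, hxy, hx, hy⟩ := h1
    exact claim_case1 hl IH hx hy hxy

end Graph

lemma exists_walk {G : SimpleGraph V} : ∀ (l : List V), l ≠ [] → l.Nodup →
    (∀ e ∈ edg l, e ∈ G.edgeSet) → ∃ (a b : V) (p : G.Walk a b), p.support = l ∧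
      (p.edges : Multiset (Sym2 V)) = edg l := by
  intro l
  induction l with
  | nil => intro h; exact absurd rfl h
  | cons x l ih =>
    intro _ hnd he
    cases l with
    | nil => exact ⟨x, x, SimpleGraph.Walk.nil, by simp, by simp [edg]⟩
    | cons y t =>
      obtain ⟨a, b, p, hp1, hp2⟩ := ih (by simp) (List.nodup_cons.1 hnd).2
        (fun e h => he e (by simp [edg, h]))
      have hay : a = y := by
        have := p.support_eq_cons
        rw [hp1] at this
        simpa using (List.cons.inj this).1.symm
      subst hay
      have hadj : G.Adj x a := by simpa using he s(x, a) (by simp [edg])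
      refine ⟨x, b, SimpleGraph.Walk.cons hadj p, by simp [hp1], ?_⟩
      rw [SimpleGraph.Walk.edges_cons, ← Multiset.cons_coe, hp2]
      rfl

end Donald

/-- Donald: if a simple graph G has u vertices of odd degree and
g nonisolated vertices of even degree, then E(G) can be partitioned into at
most u/2 + ⌊(3/4)g⌋ paths; in particular at most ⌊(3/4)n⌋ paths suffice. -/
theorem stmt_10 (n : ℕ) (G : SimpleGraph (Fin n)) [DecidableRel G.Adj]
    (u g : ℕ)
    (hu : u = (Finset.univ.filter fun v => Odd (G.degree v)).card)
    (hg : g = (Finset.univ.filter fun v =>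
      Even (G.degree v) ∧ 0 < G.degree v).card) :
    ∃ L : List (Σ (a : Fin n) (b : Fin n), G.Walk a b),
      L.length ≤ u / 2 + 3 * g / 4 ∧ L.length ≤ 3 * n / 4 ∧
      (∀ p ∈ L, p.2.2.IsPath) ∧
      List.Pairwise (fun p q => ∀ e ∈ p.2.2.edges, e ∉ q.2.2.edges) L ∧
      (∀ e : Sym2 (Fin n), e ∈ G.edgeSet ↔ ∃ p ∈ L, e ∈ p.2.2.edges) := by
  obtain ⟨D, hD, hc, -⟩ := Donald.claim_all _ G.edgeFinset rfl
    (fun e he => G.not_isDiag_of_mem_edgeSet (SimpleGraph.mem_edgeFinset.1 he)) ∅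
  have hdeg : ∀ v, Donald.deg G.edgeFinset v = G.degree v := by
    intro v
    rw [← G.card_incidenceFinset_eq_degree v, G.incidenceFinset_eq_filter v]
    rfl
  have hsum : ∑ v, Donald.wt G.edgeFinset ∅ v = 2 * u + 3 * g := by
    rw [hu, hg, Finset.card_filter, Finset.card_filter, Finset.mul_sum, Finset.mul_sum,
      ← Finset.sum_add_distrib]
    refine Finset.sum_congr rfl fun v _ => ?_
    simp only [Donald.wt, hdeg, Finset.notMem_empty, if_false, Nat.odd_iff, Nat.even_iff]
    split_ifs <;> omega
  have hue : Even u := by rw [hu]; exact G.even_card_odd_degree_vertices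
  have hun : u + g ≤ n := by
    rw [hu, hg, ← Finset.card_union_of_disjoint]
    · exact (Finset.card_le_univ _).trans (by simp)
    · rw [Finset.disjoint_filter]
      intro v _ h1 h2
      exact Nat.not_even_iff_odd.2 h1 h2.1
  obtain ⟨hne, hnd, heq⟩ := hD
  have hnodup : (Donald.edgS D).Nodup := by rw [heq]; exact G.edgeFinset.nodup
  -- build walks
  have build : ∀ M : List (List (Fin n)), (∀ l ∈ M, l ≠ []) → (∀ l ∈ M, l.Nodup) →
      (∀ e ∈ Donald.edgS (M : Multiset (List (Fin n))), e ∈ G.edgeSet) →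
      (Donald.edgS (M : Multiset (List (Fin n)))).Nodup →
      ∃ L : List (Σ (a : Fin n) (b : Fin n), G.Walk a b), L.length = M.length ∧
        (∀ p ∈ L, p.2.2.IsPath) ∧
        List.Pairwise (fun p q => ∀ e ∈ p.2.2.edges, e ∉ q.2.2.edges) L ∧
        (∀ e : Sym2 (Fin n), e ∈ Donald.edgS (M : Multiset (List (Fin n))) ↔
          ∃ p ∈ L, e ∈ p.2.2.edges) := by
    intro M
    induction M with
    | nil =>
      intro _ _ _ _
      exact ⟨[], rfl, by simp, by simp, by simp [Donald.edgS]⟩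
    | cons l M ih =>
      intro h1 h2 h3 h4
      rw [← Multiset.cons_coe, Donald.edgS_cons] at h3 h4
      rw [Multiset.nodup_add] at h4
      obtain ⟨L, i1, i2, i3, i4⟩ := ih (fun l hl => h1 l (by simp [hl]))
        (fun l hl => h2 l (by simp [hl])) (fun e he => h3 e (by simp [he])) h4.2.1
      obtain ⟨a, b, p, hp1, hp2⟩ := Donald.exists_walk (G := G) l (h1 l (by simp))
        (h2 l (by simp)) (fun e he => h3 e (by simp [he]))
      have hpe : ∀ e, e ∈ p.edges ↔ e ∈ Donald.edg l := by
        intro e; rw [← hp2]; simp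
      refine ⟨⟨a, b, p⟩ :: L, by simp [i1], ?_, ?_, ?_⟩
      · intro q hq
        rcases List.mem_cons.1 hq with rfl | hq
        · exact SimpleGraph.Walk.IsPath.mk' (by rw [hp1]; exact h2 l (by simp))
        · exact i2 q hq
      · rw [List.pairwise_cons]
        refine ⟨fun q hq e he he' => ?_, i3⟩
        exact Multiset.disjoint_left.1 h4.2.2 ((hpe e).1 he) ((i4 e).2 ⟨q, hq, he'⟩)
      · intro e
        rw [← Multiset.cons_coe, Donald.edgS_cons, Multiset.mem_add, i4, ← hpe]
        simp
  obtain ⟨L, j1, j2, j3, j4⟩ := build D.toList (by simpa using hne) (by simpa using hnd)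
    (by
      intro e he
      rw [Multiset.coe_toList, heq] at he
      exact SimpleGraph.mem_edgeFinset.1 he)
    (by rw [Multiset.coe_toList]; exact hnodup)
  have hlen : L.length = D.card := by rw [j1]; simp
  obtain ⟨k, hk⟩ := hue
  refine ⟨L, by omega, by omega, j2, j3, ?_⟩
  intro e
  rw [← j4, Multiset.coe_toList, heq]
  simp
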